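/- arXiv:2108.00619 — 2 statements merged into one kernel-verified Lean document; each statement's English description precedes it below -/
import Mathlib

section
/- Let β⁺, β⁻, α⁺, α⁻ > 0 and ρ = β⁻/β⁺. Let S^e be the set of pairs (v⁺, v⁻) of lowest-order Nédélec fields v^±(x) = a^± + b^± J(x) (with a^± ∈ ℝ², b^± ∈ ℝ) such that v⁺(x)·t = v⁻(x)·t for all x ∈ L, α⁺ curl v⁺ = α⁻ curl v⁻, and β⁺ (v⁺(x^m)·n) = β⁻ (v⁻(x^m)·n). Then S^e is a linear space, the map Ψ(c, c₀) = (x ↦ M_ρ c + (c₀/α⁺) J(x − x^m), x ↦ c + (c₀/α⁻) J(x − x^m)) is a linear bijection from ℝ² × ℝ onto S^e, and dim S^e = 3. (This is the explicit representation and dimension count of the local H(curl) IFE space S^e_h(K).) -/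
/-!
A Nédélec field `a + b J(x)` may be recentred as `p + b J(x − xᵐ)`, where `p` is its value at `xᵐ`;
its curl is the constant `2b`. Along `L` the vector `J(x − xᵐ)` is parallel to `n`, so it has no
tangential component, and the tangential condition on the whole line reduces to the one at `xᵐ`.
Since `M_ρ = t tᵀ + ρ n nᵀ`, the tangential and normal conditions at `xᵐ` say together that
`v⁺(xᵐ) = M_ρ v⁻(xᵐ)`, while the curl condition says `α⁺ b⁺ = α⁻ b⁻ =: c₀`. Hence a pair satisfying
the jump conditions is `Ψ(v⁻(xᵐ), c₀)` (`jump_iff`). Injectivity of `Ψ` follows from evaluating the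
second component at `xᵐ` and its curl; the dimension is that of `ℝ² × ℝ`.
-/

open Matrix

/-- The IFE jump matrix `M_ρ` for a unit normal `n = (n 0, n 1)` and parameter `ρ`. -/
noncomputable def Mmat (n : Fin 2 → ℝ) (ρ : ℝ) : Matrix (Fin 2) (Fin 2) ℝ :=
  !![n 1 ^ 2 + ρ * n 0 ^ 2, (ρ - 1) * n 0 * n 1;
     (ρ - 1) * n 0 * n 1, n 0 ^ 2 + ρ * n 1 ^ 2]

/-- The tangential vector `t = (n₂, −n₁)`. -/
noncomputable def tvec (n : Fin 2 → ℝ) : Fin 2 → ℝ := ![n 1, -n 0]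

/-- The `π/2` rotation `J(y₁, y₂) = (−y₂, y₁)`. -/
noncomputable def Jrot (y : Fin 2 → ℝ) : Fin 2 → ℝ := ![-(y 1), y 0]

/-- The scalar curl `curl w = ∂₁w₂ − ∂₂w₁` of a planar vector field. -/
noncomputable def curl2 (w : (Fin 2 → ℝ) → Fin 2 → ℝ) (x : Fin 2 → ℝ) : ℝ :=
  fderiv ℝ (fun y => w y 1) x (Pi.single 0 1) - fderiv ℝ (fun y => w y 0) x (Pi.single 1 1)

lemma Jrot_sub (x y : Fin 2 → ℝ) : Jrot (x - y) = Jrot x - Jrot y := by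
  ext i; fin_cases i <;> simp [Jrot]; ring

lemma Jrot_zero : Jrot 0 = 0 := by
  ext i; fin_cases i <;> simp [Jrot]

/-- Recentring at `y`: the constant term `p` becomes the value of the field at `y`. -/
lemma recenter (p y : Fin 2 → ℝ) (b : ℝ) :
    (fun x => p + b • Jrot (x - y)) = fun x => (p - b • Jrot y) + b • Jrot x := by
  funext x; rw [Jrot_sub, smul_sub]; abel

lemma curl2_nedelec (a : Fin 2 → ℝ) (b : ℝ) (x : Fin 2 → ℝ) :
    curl2 (fun y => a + b • Jrot y) x = 2 * b := by
  have h1 : HasFDerivAt (fun y : Fin 2 → ℝ => (a + b • Jrot y) 1)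
      (b • (ContinuousLinearMap.proj 0 : (Fin 2 → ℝ) →L[ℝ] ℝ)) x := by
    simpa [Jrot] using
      ((((ContinuousLinearMap.proj 0 : (Fin 2 → ℝ) →L[ℝ] ℝ).hasFDerivAt
        (x := x)).const_smul b).const_add (a 1))
  have h0 : HasFDerivAt (fun y : Fin 2 → ℝ => (a + b • Jrot y) 0)
      (b • -(ContinuousLinearMap.proj 1 : (Fin 2 → ℝ) →L[ℝ] ℝ)) x := by
    simpa [Jrot] using
      (((-(ContinuousLinearMap.proj 1 : (Fin 2 → ℝ) →L[ℝ] ℝ)).hasFDerivAt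
        (x := x)).const_smul b).const_add (a 0)
  rw [curl2, h1.fderiv, h0.fderiv]
  simp
  ring

lemma curl2_recentered (p y : Fin 2 → ℝ) (b : ℝ) (x : Fin 2 → ℝ) :
    curl2 (fun x => p + b • Jrot (x - y)) x = 2 * b := by
  rw [recenter, curl2_nedelec]

/-- Since `t = −J n` and `J` is orthogonal, `J y` has no tangential part when `y ⬝ᵥ n = 0`: this
extends tangential continuity from `xᵐ` to all of `L`. -/
lemma Jrot_dot_tvec (n y : Fin 2 → ℝ) : Jrot y ⬝ᵥ tvec n = -(y ⬝ᵥ n) := by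
  simp [Jrot, tvec, dotProduct, Fin.sum_univ_two]

/-- `t` is an eigenvector of the symmetric matrix `M_ρ` with eigenvalue `1`. -/
lemma Mmat_dot_tvec (n : Fin 2 → ℝ) (hn : n 0 ^ 2 + n 1 ^ 2 = 1) (ρ : ℝ) (c : Fin 2 → ℝ) :
    (Mmat n ρ *ᵥ c) ⬝ᵥ tvec n = c ⬝ᵥ tvec n := by
  simp [Mmat, tvec, dotProduct, Matrix.mulVec, Fin.sum_univ_two]
  linear_combination (c 0 * n 1 - c 1 * n 0) * hn

/-- `n` is an eigenvector of the symmetric matrix `M_ρ` with eigenvalue `ρ`. -/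
lemma Mmat_dot_n (n : Fin 2 → ℝ) (hn : n 0 ^ 2 + n 1 ^ 2 = 1) (ρ : ℝ) (c : Fin 2 → ℝ) :
    (Mmat n ρ *ᵥ c) ⬝ᵥ n = ρ * (c ⬝ᵥ n) := by
  simp [Mmat, dotProduct, Matrix.mulVec, Fin.sum_univ_two]
  linear_combination ρ * (c 0 * n 0 + c 1 * n 1) * hn

/-- `(t, n)` is an orthonormal basis, so the tangential and normal components determine a vector. -/
lemma eq_of_dot_eq (n : Fin 2 → ℝ) (hn : n 0 ^ 2 + n 1 ^ 2 = 1) {u w : Fin 2 → ℝ}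
    (ht : u ⬝ᵥ tvec n = w ⬝ᵥ tvec n) (hnn : u ⬝ᵥ n = w ⬝ᵥ n) : u = w := by
  simp [tvec, dotProduct, Fin.sum_univ_two] at ht hnn
  ext i
  fin_cases i
  · simp only [Fin.zero_eta]
    linear_combination n 1 * ht + n 0 * hnn - (u 0 - w 0) * hn
  · simp only [Fin.mk_one]
    linear_combination -n 0 * ht + n 1 * hnn - (u 1 - w 1) * hn

/-- For Nédélec fields recentred at `xᵐ`, the three jump conditions decouple into one condition on
the values at `xᵐ` and one on the rotation coefficients. -/
lemma jump_iff (n : Fin 2 → ℝ) (hn : n 0 ^ 2 + n 1 ^ 2 = 1) {βp βm αp αm : ℝ} (hβp : 0 < βp)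
    (xm p q : Fin 2 → ℝ) (b d : ℝ) :
    ((∀ x : Fin 2 → ℝ, (x - xm) ⬝ᵥ n = 0 →
        (p + b • Jrot (x - xm)) ⬝ᵥ tvec n = (q + d • Jrot (x - xm)) ⬝ᵥ tvec n) ∧
      (∀ x : Fin 2 → ℝ, αp * curl2 (fun x => p + b • Jrot (x - xm)) x =
        αm * curl2 (fun x => q + d • Jrot (x - xm)) x) ∧
      βp * ((p + b • Jrot (xm - xm)) ⬝ᵥ n) = βm * ((q + d • Jrot (xm - xm)) ⬝ᵥ n)) ↔
    p = Mmat n (βm / βp) *ᵥ q ∧ αp * b = αm * d := by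
  simp only [curl2_recentered, sub_self, Jrot_zero, smul_zero, add_zero]
  constructor
  · rintro ⟨h1, h2, h3⟩
    refine ⟨eq_of_dot_eq n hn ?_ ?_, by linear_combination h2 0 / 2⟩
    · rw [Mmat_dot_tvec n hn]
      simpa [Jrot_zero] using h1 xm (by simp)
    · rw [Mmat_dot_n n hn]
      field_simp
      linear_combination h3
  · rintro ⟨rfl, h⟩
    refine ⟨fun x hx => ?_, fun _ => by linear_combination 2 * h, ?_⟩
    · simp only [add_dotProduct, smul_dotProduct, Jrot_dot_tvec, hx, Mmat_dot_tvec n hn, neg_zero,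
        smul_zero]
    · rw [Mmat_dot_n n hn]
      field_simp

/-- the local `H(curl)` IFE space `Sᵉ` (pairs of lowest-order Nédélec fields
satisfying tangential continuity on `L`, `α⁺ curl v⁺ = α⁻ curl v⁻`, and the normal jump
condition at `xᵐ`) is a linear space, the explicit representation
`Ψ(c, c₀) = (M_ρ c + (c₀/α⁺) J(x − xᵐ), c + (c₀/α⁻) J(x − xᵐ))` is a linear bijection of
`ℝ² × ℝ` onto `Sᵉ`, and `dim Sᵉ = 3`. -/
theorem IFE_Hcurl_space_representation (n : Fin 2 → ℝ) (hn : n 0 ^ 2 + n 1 ^ 2 = 1)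
    (βp βm αp αm : ℝ) (hβp : 0 < βp) (hβm : 0 < βm) (hαp : 0 < αp) (hαm : 0 < αm)
    (ρ : ℝ) (hρ : ρ = βm / βp) (xm : Fin 2 → ℝ)
    (Se : Set (((Fin 2 → ℝ) → Fin 2 → ℝ) × ((Fin 2 → ℝ) → Fin 2 → ℝ)))
    (hSe : Se = { v |
      (∃ (a : Fin 2 → ℝ) (b : ℝ), v.1 = fun x => a + b • Jrot x) ∧
      (∃ (a : Fin 2 → ℝ) (b : ℝ), v.2 = fun x => a + b • Jrot x) ∧
      (∀ x : Fin 2 → ℝ, (x - xm) ⬝ᵥ n = 0 → v.1 x ⬝ᵥ tvec n = v.2 x ⬝ᵥ tvec n) ∧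
      (∀ x : Fin 2 → ℝ, αp * curl2 v.1 x = αm * curl2 v.2 x) ∧
      βp * (v.1 xm ⬝ᵥ n) = βm * (v.2 xm ⬝ᵥ n) })
    (Ψ : (Fin 2 → ℝ) × ℝ → ((Fin 2 → ℝ) → Fin 2 → ℝ) × ((Fin 2 → ℝ) → Fin 2 → ℝ))
    (hΨ : Ψ = fun p => (fun x => (Mmat n ρ) *ᵥ p.1 + (p.2 / αp) • Jrot (x - xm),
                        fun x => p.1 + (p.2 / αm) • Jrot (x - xm))) :
    (∃ W : Submodule ℝ (((Fin 2 → ℝ) → Fin 2 → ℝ) × ((Fin 2 → ℝ) → Fin 2 → ℝ)),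
      (W : Set _) = Se ∧ Module.finrank ℝ W = 3) ∧
    IsLinearMap ℝ Ψ ∧ Function.Injective Ψ ∧ Set.range Ψ = Se := by
  have hlin : IsLinearMap ℝ Ψ := by
    subst hΨ
    constructor
    · intro u v
      refine Prod.ext (funext fun x => ?_) (funext fun x => ?_) <;>
        simp only [Prod.fst_add, Prod.snd_add, Pi.add_apply, Matrix.mulVec_add] <;> module
    · intro r u
      refine Prod.ext (funext fun x => ?_) (funext fun x => ?_) <;>
        simp only [Prod.smul_fst, Prod.smul_snd, Pi.smul_apply, Matrix.mulVec_smul, smul_eq_mul] <;>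
        module
  have hinj : Function.Injective Ψ := by
    subst hΨ
    rintro ⟨c, s⟩ ⟨c', s'⟩ h
    have h2 := congrArg Prod.snd h
    dsimp only at h2
    have hc : c = c' := by simpa [Jrot_zero] using congrFun h2 xm
    have hs := congrArg (fun w => curl2 w 0) h2
    simp only [curl2_recentered] at hs
    have hs' : s = s' := by
      field_simp at hs
      exact hs
    rw [hc, hs']
  have hrange : Set.range Ψ = Se := by
    subst hΨ hSe hρ
    ext v
    constructor
    · rintro ⟨⟨c, s⟩, rfl⟩
      exact ⟨⟨_, _, recenter _ _ _⟩, ⟨_, _, recenter _ _ _⟩,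
        (jump_iff n hn hβp xm _ _ _ _).2 ⟨rfl, by field_simp⟩⟩
    · obtain ⟨v1, v2⟩ := v
      rintro ⟨⟨a, b, h1⟩, ⟨a', b', h2⟩, h⟩
      have e1 : v1 = fun x => (a + b • Jrot xm) + b • Jrot (x - xm) := by
        rw [recenter]; simpa using h1
      have e2 : v2 = fun x => (a' + b' • Jrot xm) + b' • Jrot (x - xm) := by
        rw [recenter]; simpa using h2
      subst e1 e2
      obtain ⟨hp, hb⟩ := (jump_iff n hn hβp xm _ _ _ _).1 h
      refine ⟨(a' + b' • Jrot xm, αm * b'), ?_⟩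
      have k1 : αm * b' / αp = b := by rw [← hb]; field_simp
      have k2 : αm * b' / αm = b' := by field_simp
      simp only [k1, k2, ← hp]
  refine ⟨⟨LinearMap.range (hlin.mk' Ψ), ?_, ?_⟩, hlin, hinj, hrange⟩
  · rw [LinearMap.coe_range]
    exact hrange
  · rw [LinearMap.finrank_range_of_inj (f := hlin.mk' Ψ) hinj]
    simp
end

section
/- Let β⁺, β⁻ > 0, ρ = β⁻/β⁺, and M'_ρ = ρ⁻¹ M_ρ. Suppose the pair (v⁺, v⁻) of lowest-order Raviart–Thomas fields v^±(x) = a^± + b^± x satisfies the H(div) IFE jump conditions (normal continuity on L, (β⁺)⁻¹ (v⁺(x^m)·t) = (β⁻)⁻¹ (v⁻(x^m)·t), and div v⁺ = div v⁻) and div v⁺ = 0. Then div v⁻ = 0 and there exists c ∈ ℝ² such that v⁺ is the constant field M'_ρ c and v⁻ is the constant field c. Moreover, for every q ∈ ℝ there exists a pair in this space with div v⁺ = div v⁻ = q. (This is the exactness and surjectivity of div for the local H(div) IFE de Rham complex.) -/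
/-!
The divergence of `a + b x` is the constant `2 b`, so `div v⁺ = div v⁻ = 0` forces both fields to
be constant. The jump conditions at `x^m` then fix the normal and tangential components of `v⁺` in
terms of those of `c = v⁻`, and since `M'_ρ = n nᵀ + ρ⁻¹ t tᵀ` this says `v⁺ = M'_ρ c`.
For surjectivity, `v⁺ = v⁻ = (q / 2) (x - x^m)` has divergence `q` and vanishes at `x^m`, so the
tangential condition holds whatever the coefficients are.
-/

open Matrix

/-- The divergence `div w = ∂₁w₁ + ∂₂w₂` of a planar vector field. -/
noncomputable def div2 (w : (Fin 2 → ℝ) → Fin 2 → ℝ) (x : Fin 2 → ℝ) : ℝ :=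
  fderiv ℝ (fun y => w y 0) x (Pi.single 0 1) + fderiv ℝ (fun y => w y 1) x (Pi.single 1 1)

/-- A Raviart–Thomas field `x ↦ a + b x` has constant divergence `2 b`. -/
theorem div2_affine (a : Fin 2 → ℝ) (b : ℝ) (x : Fin 2 → ℝ) :
    div2 (fun x => a + b • x) x = 2 * b := by
  have h (i : Fin 2) : HasFDerivAt (fun y : Fin 2 → ℝ => (a + b • y) i)
      (b • ContinuousLinearMap.proj (R := ℝ) (φ := fun _ : Fin 2 => ℝ) i) x :=
    ((hasFDerivAt_apply (𝕜 := ℝ) i x).const_smul b).const_add (a i)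
  simp only [div2, (h 0).fderiv, (h 1).fderiv]
  simp
  ring

/-- `M'_ρ c` is the unique vector with the normal component of `c` and `ρ⁻¹` times its
tangential component, because `M'_ρ = n nᵀ + ρ⁻¹ t tᵀ` and `(n, t)` is an orthonormal basis. -/
theorem eq_Mmat_mulVec (n : Fin 2 → ℝ) (hn : n 0 ^ 2 + n 1 ^ 2 = 1) {ρ : ℝ} (hρ : ρ ≠ 0)
    {a c : Fin 2 → ℝ} (hN : a ⬝ᵥ n = c ⬝ᵥ n) (hT : a ⬝ᵥ tvec n = ρ⁻¹ * (c ⬝ᵥ tvec n)) :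
    a = (ρ⁻¹ • Mmat n ρ) *ᵥ c := by
  have hr : ρ⁻¹ * ρ = 1 := inv_mul_cancel₀ hρ
  simp only [tvec, dotProduct, Fin.sum_univ_two, Matrix.cons_val_zero, Matrix.cons_val_one]
    at hN hT
  -- Each coordinate is recovered by expanding `a = (a ⬝ n) n + (a ⬝ t) t`.
  ext i
  fin_cases i <;> simp [Mmat, Matrix.mulVec, dotProduct, Fin.sum_univ_two]
  · linear_combination n 0 * hN + n 1 * hT - a 0 * hn - n 0 * (c 0 * n 0 + c 1 * n 1) * hr
  · linear_combination n 1 * hN - n 0 * hT - a 1 * hn - n 1 * (c 0 * n 0 + c 1 * n 1) * hr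

/-- in the local `H(div)` IFE space, if `div v⁺ = 0` then `div v⁻ = 0` and
the pair consists of the constant fields `(M'_ρ c, c)` for some `c ∈ ℝ²`; moreover,
every constant `q ∈ ℝ` is attained as the (common) divergence of some pair in the space
(exactness and surjectivity of `div` for the local `H(div)` IFE de Rham complex). -/
theorem IFE_Hdiv_exactness (n : Fin 2 → ℝ) (hn : n 0 ^ 2 + n 1 ^ 2 = 1)
    (βp βm : ℝ) (hβp : 0 < βp) (hβm : 0 < βm) (ρ : ℝ) (hρ : ρ = βm / βp)
    (xm : Fin 2 → ℝ) :
    (∀ (ap am : Fin 2 → ℝ) (bp bm : ℝ) (vp vm : (Fin 2 → ℝ) → Fin 2 → ℝ),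
      vp = (fun x => ap + bp • x) → vm = (fun x => am + bm • x) →
      (∀ x : Fin 2 → ℝ, (x - xm) ⬝ᵥ n = 0 → vp x ⬝ᵥ n = vm x ⬝ᵥ n) →
      βp⁻¹ * (vp xm ⬝ᵥ tvec n) = βm⁻¹ * (vm xm ⬝ᵥ tvec n) →
      (∀ x : Fin 2 → ℝ, div2 vp x = div2 vm x) →
      (∀ x : Fin 2 → ℝ, div2 vp x = 0) →
      (∀ x : Fin 2 → ℝ, div2 vm x = 0) ∧
      ∃ c : Fin 2 → ℝ, (∀ x : Fin 2 → ℝ, vp x = (ρ⁻¹ • Mmat n ρ) *ᵥ c) ∧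
        (∀ x : Fin 2 → ℝ, vm x = c)) ∧
    (∀ q : ℝ, ∃ (ap am : Fin 2 → ℝ) (bp bm : ℝ)
      (vp vm : (Fin 2 → ℝ) → Fin 2 → ℝ),
      vp = (fun x => ap + bp • x) ∧ vm = (fun x => am + bm • x) ∧
      (∀ x : Fin 2 → ℝ, (x - xm) ⬝ᵥ n = 0 → vp x ⬝ᵥ n = vm x ⬝ᵥ n) ∧
      βp⁻¹ * (vp xm ⬝ᵥ tvec n) = βm⁻¹ * (vm xm ⬝ᵥ tvec n) ∧
      (∀ x : Fin 2 → ℝ, div2 vp x = div2 vm x) ∧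
      (∀ x : Fin 2 → ℝ, div2 vp x = q) ∧ (∀ x : Fin 2 → ℝ, div2 vm x = q)) := by
  constructor
  · rintro ap am bp bm vp vm rfl rfl hN hT hdiv hdp
    have hbp : bp = 0 := by
      have := hdp 0
      rw [div2_affine] at this
      linarith
    have hbm : bm = 0 := by
      have := hdiv 0
      rw [div2_affine, div2_affine] at this
      linarith
    refine ⟨fun x => (hdiv x).symm.trans (hdp x), am, fun x => ?_, fun x => by simp [hbm]⟩
    have hN' := hN xm (by simp)
    simp only [hbp, hbm, zero_smul, add_zero] at hN' hT ⊢
    refine eq_Mmat_mulVec n hn (hρ ▸ (div_pos hβm hβp).ne') hN' ?_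
    rw [hρ]
    field_simp at hT ⊢
    linarith
  · intro q
    refine ⟨-(q / 2) • xm, -(q / 2) • xm, q / 2, q / 2, _, _, rfl, rfl, fun _ _ => rfl, ?_,
      fun _ => rfl, fun x => ?_, fun x => ?_⟩
    · simp
    all_goals rw [div2_affine]; ring
end
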